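/- For each integer n ≥ 2, let λ_n be the largest real root of the polynomial t^{4n−2} − t^{3n−1} − t^{3n−2} − t^{n} − t^{n−1} + 1 (such a root exists and satisfies λ_n > 1), and let μ be the largest real root of t^{4} − 2t^{3} − 2t + 1. Then lim_{n→∞} (2n − 1) · log λ_n = 2 · log μ. -/

import Mathlib

open Filter

/-- The clique polynomial `t^{4n-2} - t^{3n-1} - t^{3n-2} - t^n - t^{n-1} + 1`
of the fibered class `(2n-1, 1, n-1)₋`, as a real function. -/
noncomputable def Pfun (n : ℕ) (t : ℝ) : ℝ :=
  t ^ (4 * n - 2) - t ^ (3 * n - 1) - t ^ (3 * n - 2) - t ^ n - t ^ (n - 1) + 1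

/-!
Put `t = w²`, `x = w ^ (2n - 1)` and `c = w + w⁻¹`. Then `Pfun n t = x⁴ - c x³ - c x + 1`, a
palindromic quartic whose only root `x > 1` depends continuously on `c`. Its positive roots satisfy
`x < c + 1 ≤ 3w`, so a root `t > 1` has `t ^ (n - 1) < 3` and must tend to `1` as `n → ∞`. Hence
`c → 2`, and `x = √t ^ (2n - 1)` tends to the root `μ` of the quartic with `c = 2`.
-/

open Topology

section GreatestSolution

variable {α β : Type*} [ConditionallyCompleteLinearOrder α] [TopologicalSpace α] [OrderTopology α]
  [DenselyOrdered α] [LinearOrder β] [TopologicalSpace β] [OrderClosedTopology β]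
  {f : α → β} {a : α} {y : β}

theorem exists_isGreatest_eq_of_eventually_gt (hf : Continuous f) (ha : f a < y)
    (hy : ∀ᶠ t in atTop, y < f t) : ∃ L, a < L ∧ IsGreatest {t | f t = y} L := by
  have : Nonempty α := ⟨a⟩
  obtain ⟨b, hab, hb⟩ := (atTop_basis' a).eventually_iff.mp hy
  have hcompact : IsCompact (Set.Icc a b ∩ {t | f t = y}) :=
    isCompact_Icc.inter_right (isClosed_eq hf continuous_const)
  have hnonempty : (Set.Icc a b ∩ {t | f t = y}).Nonempty :=
    intermediate_value_Icc hab hf.continuousOn ⟨ha.le, (hb Set.self_mem_Ici).le⟩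
  obtain ⟨L, ⟨⟨haL, -⟩, hfL⟩, hmax⟩ := hcompact.exists_isGreatest hnonempty
  refine ⟨L, haL.lt_of_ne ?_, hfL, fun r hr => ?_⟩
  · rintro rfl
    exact ha.ne hfL
  · rcases lt_or_ge r a with hra | har
    · exact hra.le.trans haL
    · have hrb : r < b := not_le.mp fun hbr => (hb hbr).ne' hr
      exact hmax ⟨⟨har, hrb.le⟩, hr⟩

theorem lt_of_isGreatest_eq_of_eventually_gt (hf : Continuous f) (ha : f a < y)
    (hy : ∀ᶠ t in atTop, y < f t) {L : α} (hL : IsGreatest {t | f t = y} L) : a < L := by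
  obtain ⟨L', haL', hL'⟩ := exists_isGreatest_eq_of_eventually_gt hf ha hy
  exact haL'.trans_eq (hL'.unique hL)

end GreatestSolution

theorem eq_add_sqrt_div_two_of_sq_eq {s c d : ℝ} (hs : 0 < s) (hd : 0 ≤ d)
    (h : s ^ 2 = c * s + d) : s = (c + √(c ^ 2 + 4 * d)) / 2 := by
  have hcs : 0 ≤ 2 * s - c := by
    refine nonneg_of_mul_nonneg_right ?_ hs
    linarith [sq_nonneg s, show s * (2 * s - c) = s ^ 2 + d by linear_combination h]
  have hsqrt : √(c ^ 2 + 4 * d) = 2 * s - c := by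
    rw [show c ^ 2 + 4 * d = (2 * s - c) ^ 2 by linear_combination -4 * h, Real.sqrt_sq hcs]
  linarith

theorem eq_add_sqrt_div_two_of_add_inv_eq {x s : ℝ} (hx : 1 ≤ x) (h : x + x⁻¹ = s) :
    x = (s + √(s ^ 2 - 4)) / 2 := by
  have hx_inv : x * x⁻¹ = 1 := mul_inv_cancel₀ (by positivity)
  have hsqrt : √(s ^ 2 - 4) = x - x⁻¹ := by
    rw [← h, show (x + x⁻¹) ^ 2 - 4 = (x - x⁻¹) ^ 2 by linear_combination 4 * hx_inv,
      Real.sqrt_sq (by linarith [inv_le_one_of_one_le₀ hx])]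
  linarith

/-- The palindromic quartic `x⁴ - c x³ - c x + 1`. The clique polynomials become quartics of this
form, and `c = 2` gives the quartic whose largest root is `δ(D₄)`. -/
def palindromicQuartic (c x : ℝ) : ℝ :=
  x ^ 4 - c * x ^ 3 - c * x + 1

/-- The closed form of the root of `palindromicQuartic c` in `(1, ∞)`, obtained by solving
`s² = c s + 2` for `s = x + x⁻¹`. Such a root exists only for `c > 1`; for `c < 1` one has
`s < 2` and the outer square root takes the junk value `0`. -/
noncomputable def palindromicQuarticRoot (c : ℝ) : ℝ :=
  let s := (c + √(c ^ 2 + 4 * 2)) / 2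
  (s + √(s ^ 2 - 4)) / 2

theorem continuous_palindromicQuartic (c : ℝ) : Continuous (palindromicQuartic c) := by
  unfold palindromicQuartic
  fun_prop

theorem continuous_palindromicQuarticRoot : Continuous palindromicQuarticRoot := by
  unfold palindromicQuarticRoot
  fun_prop

theorem palindromicQuartic_pos {c x : ℝ} (hx : 0 < x) (hcx : c + 1 ≤ x) :
    0 < palindromicQuartic c x := by
  calc 0 < x * ((x - 1 / 2) ^ 2 + 3 / 4) + 1 := by positivity
    _ = x ^ 4 - (x - 1) * (x ^ 3 + x) + 1 := by ring
    _ ≤ x ^ 4 - c * (x ^ 3 + x) + 1 := by gcongr; linarith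
    _ = palindromicQuartic c x := by unfold palindromicQuartic; ring

theorem eq_palindromicQuarticRoot {c x : ℝ} (hx : 1 < x) (h : palindromicQuartic c x = 0) :
    x = palindromicQuarticRoot c := by
  have hs : (x + x⁻¹) ^ 2 = c * (x + x⁻¹) + 2 := by
    unfold palindromicQuartic at h
    field_simp
    linear_combination h
  exact eq_add_sqrt_div_two_of_add_inv_eq hx.le
    (eq_add_sqrt_div_two_of_sq_eq (by positivity) zero_le_two hs)

theorem tendsto_of_palindromicQuartic_eq_zero {ι : Type*} {l : Filter ι} {c x : ι → ℝ} {c₀ x₀ : ℝ}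
    (hc : Tendsto c l (𝓝 c₀)) (hx : ∀ᶠ i in l, 1 < x i ∧ palindromicQuartic (c i) (x i) = 0)
    (hx₀ : 1 < x₀) (h₀ : palindromicQuartic c₀ x₀ = 0) : Tendsto x l (𝓝 x₀) := by
  rw [eq_palindromicQuarticRoot hx₀ h₀]
  refine ((continuous_palindromicQuarticRoot.tendsto c₀).comp hc).congr' ?_
  filter_upwards [hx] with i hi
  exact (eq_palindromicQuarticRoot hi.1 hi.2).symm

theorem one_lt_of_isGreatest_palindromicQuartic_eq_zero {c μ : ℝ} (hc : 1 < c)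
    (hμ : IsGreatest {r | palindromicQuartic c r = 0} μ) : 1 < μ := by
  refine lt_of_isGreatest_eq_of_eventually_gt (continuous_palindromicQuartic c) ?_ ?_ hμ
  · unfold palindromicQuartic
    linarith
  · filter_upwards [eventually_ge_atTop (c + 1)] with x hx
    exact palindromicQuartic_pos (by linarith) hx

theorem continuous_Pfun (n : ℕ) : Continuous (Pfun n) := by
  unfold Pfun
  fun_prop

theorem Pfun_one_right (n : ℕ) : Pfun n 1 = -2 := by
  norm_num [Pfun]

theorem Pfun_sq {n : ℕ} (hn : 1 ≤ n) {w : ℝ} (hw : w ≠ 0) :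
    Pfun n (w ^ 2) = palindromicQuartic (w + w⁻¹) (w ^ (2 * n - 1)) := by
  obtain ⟨k, rfl⟩ := Nat.exists_eq_add_of_le' hn
  rw [Pfun, palindromicQuartic, show 4 * (k + 1) - 2 = 4 * k + 2 by lia,
    show 3 * (k + 1) - 1 = 3 * k + 2 by lia, show 3 * (k + 1) - 2 = 3 * k + 1 by lia,
    Nat.add_sub_cancel, show 2 * (k + 1) - 1 = 2 * k + 1 by lia]
  field_simp
  ring

theorem Pfun_eq_palindromicQuartic_sqrt {n : ℕ} (hn : 1 ≤ n) {t : ℝ} (ht : 0 < t) :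
    Pfun n t = palindromicQuartic (√t + (√t)⁻¹) (√t ^ (2 * n - 1)) := by
  rw [← Pfun_sq hn (Real.sqrt_ne_zero'.mpr ht), Real.sq_sqrt ht.le]

theorem Pfun_pos {n : ℕ} (hn : 1 ≤ n) {t : ℝ} (ht : 1 ≤ t) (h : 3 ≤ t ^ (n - 1)) :
    0 < Pfun n t := by
  have hw : 1 ≤ √t := Real.one_le_sqrt.mpr ht
  rw [Pfun_eq_palindromicQuartic_sqrt hn (by positivity)]
  refine palindromicQuartic_pos (by positivity) ?_
  calc √t + (√t)⁻¹ + 1 ≤ 3 * √t := by linarith [inv_le_one_of_one_le₀ hw]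
    _ ≤ t ^ (n - 1) * √t := by gcongr
    _ = (√t ^ 2) ^ (n - 1) * √t := by rw [Real.sq_sqrt (by positivity)]
    _ = √t ^ (2 * n - 1) := by rw [← pow_mul, ← pow_succ]; congr 1; lia

theorem eventually_Pfun_pos {n : ℕ} (hn : 2 ≤ n) : ∀ᶠ t in atTop, 0 < Pfun n t := by
  filter_upwards [eventually_ge_atTop 3] with t ht
  have ht1 : 1 ≤ t := by linarith
  exact Pfun_pos (by lia) ht1 (ht.trans (le_self_pow₀ ht1 (by lia)))

theorem exists_isGreatest_Pfun_eq_zero {n : ℕ} (hn : 2 ≤ n) :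
    ∃ L, 1 < L ∧ IsGreatest {t | Pfun n t = 0} L :=
  exists_isGreatest_eq_of_eventually_gt (continuous_Pfun n) (by norm_num [Pfun_one_right])
    (eventually_Pfun_pos hn)

theorem one_lt_of_isGreatest_Pfun_eq_zero {n : ℕ} (hn : 2 ≤ n) {L : ℝ}
    (hL : IsGreatest {t | Pfun n t = 0} L) : 1 < L :=
  lt_of_isGreatest_eq_of_eventually_gt (continuous_Pfun n) (by norm_num [Pfun_one_right])
    (eventually_Pfun_pos hn) hL

theorem le_one_add_of_Pfun_eq_zero {k : ℕ} (hk : 0 < k) {t : ℝ} (ht : 1 ≤ t)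
    (h : Pfun (k + 1) t = 0) : t ≤ 1 + 2 / k := by
  have hpow : t ^ k < 3 := not_le.mp fun h3 => (Pfun_pos (Nat.le_add_left 1 k) ht h3).ne' h
  have bernoulli : 1 + k * (t - 1) ≤ t ^ k := by
    simpa using one_add_mul_le_pow (a := t - 1) (by linarith) k
  have hsub : t - 1 ≤ 2 / k := by
    rw [le_div_iff₀ (by positivity)]
    linarith
  linarith

section Asymptotics

variable {lam : ℕ → ℝ}

theorem tendsto_one_of_Pfun_eq_zero (hlam : ∀ᶠ n in atTop, 1 < lam n ∧ Pfun n (lam n) = 0) :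
    Tendsto lam atTop (𝓝 1) := by
  rw [← tendsto_add_atTop_iff_nat 1]
  have hupper : Tendsto (fun k : ℕ => 1 + 2 / (k : ℝ)) atTop (𝓝 1) := by
    simpa using (tendsto_const_div_atTop_nhds_zero_nat (2 : ℝ)).const_add 1
  have hlam_succ := (tendsto_add_atTop_nat 1).eventually hlam
  refine tendsto_of_tendsto_of_tendsto_of_le_of_le' tendsto_const_nhds hupper ?_ ?_
  · filter_upwards [hlam_succ] with k hk using hk.1.le
  · filter_upwards [hlam_succ, eventually_gt_atTop 0] with k hk hk0
    exact le_one_add_of_Pfun_eq_zero hk0 hk.1.le hk.2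

theorem tendsto_sqrt_pow_of_Pfun_eq_zero {μ : ℝ} (hμ : 1 < μ) (hμ0 : palindromicQuartic 2 μ = 0)
    (hlam : ∀ᶠ n in atTop, 1 < lam n ∧ Pfun n (lam n) = 0) :
    Tendsto (fun n => √(lam n) ^ (2 * n - 1)) atTop (𝓝 μ) := by
  have hsqrt : Tendsto (fun n => √(lam n)) atTop (𝓝 1) := by
    simpa using (tendsto_one_of_Pfun_eq_zero hlam).sqrt
  have hcoeff : Tendsto (fun n => √(lam n) + (√(lam n))⁻¹) atTop (𝓝 2) := by
    simpa [one_add_one_eq_two] using hsqrt.add (hsqrt.inv₀ one_ne_zero)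
  refine tendsto_of_palindromicQuartic_eq_zero hcoeff ?_ hμ hμ0
  filter_upwards [hlam, eventually_ge_atTop 1] with n ⟨hlam1, hlam0⟩ hn
  refine ⟨one_lt_pow₀ (Real.lt_sqrt_of_sq_lt (by simpa using hlam1)) (by lia), ?_⟩
  rw [← Pfun_eq_palindromicQuartic_sqrt hn (by positivity), hlam0]

theorem tendsto_mul_log_of_Pfun_eq_zero {μ : ℝ} (hμ : 1 < μ) (hμ0 : palindromicQuartic 2 μ = 0)
    (hlam : ∀ᶠ n in atTop, 1 < lam n ∧ Pfun n (lam n) = 0) :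
    Tendsto (fun n : ℕ => (2 * (n : ℝ) - 1) * Real.log (lam n)) atTop
      (𝓝 (2 * Real.log μ)) := by
  have hlog := (tendsto_sqrt_pow_of_Pfun_eq_zero hμ hμ0 hlam).log (by positivity)
  refine (hlog.const_mul 2).congr' ?_
  filter_upwards [hlam, eventually_ge_atTop 1] with n ⟨hlam1, _⟩ hn
  rw [Real.log_pow, Real.log_sqrt (by positivity), Nat.cast_sub (by lia)]
  push_cast
  ring

end Asymptotics

theorem stmt13 :
    (∀ n : ℕ, 2 ≤ n →
      ∃ L : ℝ, 1 < L ∧ Pfun n L = 0 ∧ ∀ r : ℝ, Pfun n r = 0 → r ≤ L) ∧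
    ∀ (lam : ℕ → ℝ) (mu : ℝ),
      (∀ n : ℕ, 2 ≤ n → Pfun n (lam n) = 0 ∧ ∀ r : ℝ, Pfun n r = 0 → r ≤ lam n) →
      (mu ^ 4 - 2 * mu ^ 3 - 2 * mu + 1 = 0 ∧
        ∀ r : ℝ, r ^ 4 - 2 * r ^ 3 - 2 * r + 1 = 0 → r ≤ mu) →
      Tendsto (fun n : ℕ => (2 * (n : ℝ) - 1) * Real.log (lam n)) atTop
        (nhds (2 * Real.log mu)) := by
  refine ⟨fun n hn => exists_isGreatest_Pfun_eq_zero hn, fun lam mu hlam hmu => ?_⟩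
  have hmu1 : 1 < mu := one_lt_of_isGreatest_palindromicQuartic_eq_zero one_lt_two hmu
  refine tendsto_mul_log_of_Pfun_eq_zero hmu1 hmu.1 ?_
  filter_upwards [eventually_ge_atTop 2] with n hn
  exact ⟨one_lt_of_isGreatest_Pfun_eq_zero hn (hlam n hn), (hlam n hn).1⟩
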